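/- Let F be a field such that there exists a ring homomorphism from ℝ to F or from the p-adic numbers ℚ_p to F for some prime p, let n ≥ 2 be an integer, and let w₁ ∈ F_{d₁}, w₂ ∈ F_{d₂} be nontrivial words. Then every element of SL_n(F) that is not in the center Z(SL_n(F)) is a product g₁g₂ with g₁ ∈ w₁(SL_n(F)) and g₂ ∈ w₂(SL_n(F)). -/

import Mathlib

/-- The set of `w`-values in the group `G`: the image of the word map `w : G^d → G`. -/
def wordValues {d : ℕ} (w : FreeGroup (Fin d)) (G : Type*) [Group G] : Set G :=
  Set.range fun g : Fin d → G => FreeGroup.lift g w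

/-!
By a theorem of Sourour, a nonscalar invertible matrix is a product of two matrices with prescribed
nonzero eigenvalues, as soon as the determinants match. The set of values of a word is closed under
conjugation, so it suffices that each nontrivial word takes on `SL_n` a value with `n` distinct
eigenvalues in the field. Such a value is built block-diagonally from values on `SL₂` over a
complete field `K` mapping to `F`. Take a cyclically reduced word and substitute hyperbolic elements
`h_i(t)` with pairwise distinct fixed points. As `t → 0`, the value becomes `t⁻ᵐ` times a product of
rank-one projections whose trace is nonzero, because consecutive images and kernels are transverse.
Hence the traces `τ` are unbounded, and for large `τ` the equation `u + u⁻¹ = τ` has by the inverse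
function theorem a solution `u` near `0`. Choosing the blocks one after the other with `u`
close enough to `0` keeps all eigenvalues distinct.
-/

section

open Matrix Polynomial Filter Topology Bornology

variable {ι κ : Type*} [Fintype ι] [DecidableEq ι] [Fintype κ] [DecidableEq κ]

section Conjugacy

section CommRing

variable {R : Type*} [CommRing R]

theorem det_eq_prod_of_charpoly_eq_prod {A : Matrix ι ι R} {D : ι → R}
    (hA : A.charpoly = ∏ i, (X - C (D i))) : A.det = ∏ i, D i := by
  rw [det_eq_sign_charpoly_coeff, hA, ← charpoly_diagonal, ← det_eq_sign_charpoly_coeff,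
    det_diagonal]

theorem charpoly_eq_of_isConj {A B : Matrix ι ι R} (h : IsConj A B) :
    A.charpoly = B.charpoly := by
  obtain ⟨P, hP⟩ := h
  rw [← charpoly_units_conj P A, hP.eq, mul_assoc, ← coe_units_inv, P.mul_inv, mul_one]

theorem det_eq_of_isConj {A B : Matrix ι ι R} (h : IsConj A B) : A.det = B.det := by
  rw [det_eq_sign_charpoly_coeff, charpoly_eq_of_isConj h, ← det_eq_sign_charpoly_coeff]

end CommRing

variable {F : Type*} [Field F]

theorem isConj_diagonal_of_charpoly_eq_prod {A : Matrix ι ι F} {D : ι → F}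
    (hD : Function.Injective D) (hA : A.charpoly = ∏ i, (X - C (D i))) :
    IsConj (diagonal D) A := by
  have hroot : ∀ i, Module.End.HasEigenvalue (toLin' A) (D i) := fun i => by
    rw [Module.End.hasEigenvalue_iff_isRoot_charpoly, charpoly_toLin', hA, IsRoot,
      eval_prod]
    exact Finset.prod_eq_zero (Finset.mem_univ i) (by simp)
  choose v hv using fun i => (hroot i).exists_hasEigenvector
  have hunit : IsUnit (of v)ᵀ := linearIndependent_cols_iff_isUnit.1 <|
    Module.End.eigenvectors_linearIndependent' _ D hD v hv
  obtain ⟨P, hP⟩ := hunit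
  refine ⟨P, ?_⟩
  ext k i
  have hcol : (A *ᵥ v i) k = D i * v i k := congrFun (hv i).apply_eq_smul k
  rw [hP, mul_diagonal, transpose_apply, of_apply, mul_comm, ← hcol]
  rfl

theorem exists_isConj_offDiag_ne_zero {A : Matrix ι ι F} (hA : A ∉ Set.range (scalar ι)) :
    ∃ B, IsConj A B ∧ ∃ i j, i ≠ j ∧ B i j ≠ 0 := by
  contrapose! hA
  refine mem_range_scalar_of_commute_single fun i j hij => ?_
  obtain ⟨d, rfl⟩ : ∃ d, A = diagonal d := by
    refine ⟨A.diag, ext fun k l => ?_⟩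
    obtain rfl | hkl := eq_or_ne k l
    · simp
    · rw [hA A (IsConj.refl A) k l hkl, diagonal_apply_ne _ hkl]
  have hinv (b : F) : transvection i j b * transvection i j (-b) = 1 := by
    rw [transvection_mul_transvection_same i j hij, add_neg_cancel, transvection_zero]
  have hinv' : transvection i j (-1 : F) * transvection i j 1 = 1 := by simpa using hinv (-1)
  have hconj : IsConj (diagonal d) (transvection i j 1 * diagonal d * transvection i j (-1)) :=
    ⟨⟨transvection i j 1, transvection i j (-1), hinv 1, hinv'⟩, by
      simp [SemiconjBy, mul_assoc, hinv']⟩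
  have hd : d j = d i := by
    have hentry := hA _ hconj i j hij
    rw [mul_transvection_apply_same, transvection_mul_apply_same,
      transvection_mul_apply_same] at hentry
    simpa [hij, hij.symm, add_neg_eq_zero] using hentry
  rw [commute_iff_eq]
  ext k l
  obtain rfl | hk := eq_or_ne i k <;> obtain rfl | hl := eq_or_ne j l <;> simp [*, Ne.symm]

end Conjugacy

section Sourour

variable {F : Type*} [Field F]

theorem exists_ne_zero_mul_eq_zero {κ : Type*} [Fintype κ] [Nontrivial κ] (c : Matrix κ Unit F) :
    ∃ u : Matrix Unit κ F, u ≠ 0 ∧ u * c = 0 := by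
  have hcard : Module.finrank F (Matrix Unit Unit F) < Module.finrank F (Matrix Unit κ F) := by
    simpa [Module.finrank_matrix] using Fintype.one_lt_card (α := κ)
  obtain ⟨u, hu, hu0⟩ := Submodule.exists_mem_ne_zero_of_ne_bot <|
    LinearMap.ker_ne_bot_of_finrank_lt (f := mulRightLinearMap Unit F c) hcard
  exact ⟨u, hu0, hu⟩

theorem mul_notMem_range_scalar {c : Matrix κ Unit F} {u : Matrix Unit κ F}
    (hc : c ≠ 0) (hu : u ≠ 0) (huc : u * c = 0) : c * u ∉ Set.range (scalar κ) := by
  rintro ⟨μ, hμ⟩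
  obtain ⟨k, hk⟩ : ∃ k, c k () ≠ 0 := by
    by_contra! h
    exact hc (ext fun i _ => h i)
  obtain ⟨l, hl⟩ : ∃ l, u () l ≠ 0 := by
    by_contra! h
    exact hu (ext fun _ j => h j)
  have hμc : μ • c = 0 := by
    rw [smul_eq_diagonal_mul, ← scalar_apply, hμ, Matrix.mul_assoc, huc, Matrix.mul_zero]
  have hcu : c * u = 0 := by
    rw [← hμ, (smul_eq_zero.1 hμc).resolve_right hc, map_zero]
  have hkl : c k () * u () l = 0 := by
    simpa [mul_apply] using congrFun (congrFun hcu k) l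
  exact mul_ne_zero hk hl hkl

theorem isConj_fromBlocks_upperUnitriangular {o R : Type*} [Fintype o] [DecidableEq o] [Ring R]
    (a : Matrix o o R) (r : Matrix o κ R) (c : Matrix κ o R) (B : Matrix κ κ R)
    (v : Matrix o κ R) :
    IsConj (fromBlocks a r c B)
      (fromBlocks (a + v * c) (r + v * B - (a + v * c) * v) c (B - c * v)) := by
  refine ⟨⟨fromBlocks 1 v 0 1, fromBlocks 1 (-v) 0 1, ?_, ?_⟩, ?_⟩ <;>
    simp [SemiconjBy, fromBlocks_multiply]

theorem exists_isConj_fromBlocks_smul_one (δ : F) (a : Matrix Unit Unit F) (r : Matrix Unit κ F)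
    {c : Matrix κ Unit F} (hc : c ≠ 0) (B : Matrix κ κ F) :
    ∃ r' B', IsConj (fromBlocks a r c B) (fromBlocks (δ • 1) r' c B') := by
  obtain ⟨k, hk⟩ : ∃ k, c k () ≠ 0 := by
    by_contra! h
    exact hc (ext fun i _ => h i)
  let v : Matrix Unit κ F := single () k ((δ - a () ()) / c k ())
  have hv : a + v * c = δ • 1 := by
    ext
    simp [v, hk]
  refine ⟨r + v * B - (a + v * c) * v, B - c * v, ?_⟩
  rw [← hv]
  exact isConj_fromBlocks_upperUnitriangular a r c B v

theorem det_fromBlocks_smul_one {δ : F} (hδ : δ ≠ 0) (r : Matrix Unit κ F) (c : Matrix κ Unit F)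
    (S : Matrix κ κ F) :
    (fromBlocks (δ • 1) r c (S + δ⁻¹ • (c * r))).det = δ * S.det := by
  have hfactor : fromBlocks (δ • (1 : Matrix Unit Unit F)) r c (S + δ⁻¹ • (c * r)) =
      fromBlocks 1 0 (δ⁻¹ • c) 1 * fromBlocks (δ • 1) r 0 S := by
    simp [fromBlocks_multiply, smul_smul, hδ, add_comm]
  rw [hfactor, det_mul, det_fromBlocks_zero₁₂, det_fromBlocks_zero₂₁]
  simp

theorem exists_isConj_schurComplement_notMem_range_scalar {δ : F} (hδ : δ ≠ 0)
    (a : Matrix Unit Unit F) (r : Matrix Unit κ F) {c : Matrix κ Unit F} (hc : c ≠ 0)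
    (B : Matrix κ κ F) (hdet : (fromBlocks a r c B).det ≠ 0) :
    ∃ r' S, (Nontrivial κ → S ∉ Set.range (scalar κ)) ∧
      IsConj (fromBlocks a r c B) (fromBlocks (δ • 1) r' c (S + δ⁻¹ • (c * r'))) := by
  obtain ⟨r₁, B₁, hconj⟩ := exists_isConj_fromBlocks_smul_one δ a r hc B
  obtain ⟨S, rfl⟩ : ∃ S, B₁ = S + δ⁻¹ • (c * r₁) := ⟨_, (sub_add_cancel _ _).symm⟩
  by_cases hS : Nontrivial κ → S ∉ Set.range (scalar κ)
  · exact ⟨r₁, S, hS, hconj⟩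
  obtain ⟨_, μ, rfl⟩ : Nontrivial κ ∧ S ∈ Set.range (scalar κ) := by simpa using hS
  have hμ : μ ≠ 0 := by
    rintro rfl
    rw [det_eq_of_isConj hconj, det_fromBlocks_smul_one hδ] at hdet
    simp at hdet
  -- Since `u * c = 0`, conjugating by the shear of `u` keeps the corner `δ` and moves the scalar
  -- Schur complement `μ` by a multiple of the rank-one matrix `c * u`.
  obtain ⟨u, hu, huc⟩ := exists_ne_zero_mul_eq_zero c
  refine ⟨r₁ + (μ - δ) • u, scalar κ μ - (δ⁻¹ * μ) • (c * u), fun _ => ?_, hconj.trans ?_⟩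
  · rintro ⟨ν, hν⟩
    refine mul_notMem_range_scalar hc hu huc ⟨(δ⁻¹ * μ)⁻¹ * (μ - ν), ?_⟩
    have hcu : (δ⁻¹ * μ) • (c * u) = scalar κ (μ - ν) := by rw [map_sub, hν, sub_sub_cancel]
    rw [← inv_smul_smul₀ (mul_ne_zero (inv_ne_zero hδ) hμ) (c * u), hcu]
    simp [← smul_one_eq_diagonal, smul_smul]
  · convert isConj_fromBlocks_upperUnitriangular (δ • 1) r₁ c _ u using 2
    · simp [huc]
    · simp only [sub_smul, scalar_apply, ← smul_one_eq_diagonal, Matrix.mul_add, Matrix.mul_smul,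
        Matrix.mul_one, ← Matrix.mul_assoc, huc, Matrix.zero_mul, smul_zero, add_zero, smul_mul,
        Matrix.one_mul]
      abel
    · have hcoeff : δ⁻¹ * (μ - δ) = δ⁻¹ * μ - 1 := by field_simp
      rw [Matrix.mul_add, Matrix.mul_smul, smul_add, smul_smul, hcoeff, sub_smul, one_smul]
      abel

/-- `A` is a product of two matrices with spectra `β` and `γ`, counted with multiplicity; the
spectrum is encoded by the characteristic polynomial. -/
def HasSpectralFactorization (A : Matrix ι ι F) (β γ : ι → F) : Prop :=
  ∃ L U, A = L * U ∧ L.charpoly = ∏ i, (X - C (β i)) ∧ U.charpoly = ∏ i, (X - C (γ i))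

namespace HasSpectralFactorization

theorem of_isConj {A A' : Matrix ι ι F} {β γ : ι → F} (h : HasSpectralFactorization A β γ)
    (hA : IsConj A A') : HasSpectralFactorization A' β γ := by
  obtain ⟨L, U, rfl, hL, hU⟩ := h
  obtain ⟨P, hP⟩ := hA
  refine ⟨P * L * (P⁻¹ : (Matrix ι ι F)ˣ), P * U * (P⁻¹ : (Matrix ι ι F)ˣ), ?_, ?_, ?_⟩
  · rw [← P.mul_left_inj, ← hP.eq]
    simp [mul_assoc]
  · rw [coe_units_inv, charpoly_units_conj, hL]
  · rw [coe_units_inv, charpoly_units_conj, hU]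

theorem of_submatrix {A : Matrix ι ι F} {β γ : ι → F} (e : κ ≃ ι)
    (h : HasSpectralFactorization (A.submatrix e e) (β ∘ e) (γ ∘ e)) :
    HasSpectralFactorization A β γ := by
  obtain ⟨L, U, hLU, hL, hU⟩ := h
  refine ⟨reindex e e L, reindex e e U, ?_, ?_, ?_⟩
  · rw [reindex_apply, reindex_apply, submatrix_mul_equiv, ← hLU]
    simp
  · rw [charpoly_reindex, hL]
    exact Fintype.prod_equiv e _ _ fun _ => rfl
  · rw [charpoly_reindex, hU]
    exact Fintype.prod_equiv e _ _ fun _ => rfl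

theorem of_subsingleton [Subsingleton ι] {A : Matrix ι ι F} {β γ : ι → F}
    (hdet : A.det = (∏ i, β i) * ∏ i, γ i) : HasSpectralFactorization A β γ := by
  refine ⟨diagonal β, diagonal γ, ?_, charpoly_diagonal β, charpoly_diagonal γ⟩
  ext i j
  obtain rfl := Subsingleton.elim i j
  simpa [det_eq_elem_of_subsingleton A i, Fintype.prod_subsingleton _ i] using hdet

theorem fromBlocks_of_schurComplement {β γ : Unit ⊕ κ → F} (hβ : β (.inl ()) ≠ 0)
    (hγ : γ (.inl ()) ≠ 0) (r : Matrix Unit κ F) (c : Matrix κ Unit F) {S : Matrix κ κ F}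
    (hS : HasSpectralFactorization S (β ∘ .inr) (γ ∘ .inr)) :
    HasSpectralFactorization
      (fromBlocks ((β (.inl ()) * γ (.inl ())) • 1) r c
        (S + (β (.inl ()) * γ (.inl ()))⁻¹ • (c * r))) β γ := by
  obtain ⟨L, U, rfl, hL, hU⟩ := hS
  generalize hβ₀ : β (.inl ()) = β₀ at *
  generalize hγ₀ : γ (.inl ()) = γ₀ at *
  have hunit (x : F) : (x • (1 : Matrix Unit Unit F)).charpoly = X - C x := by simp [charpoly]
  refine ⟨fromBlocks (β₀ • 1) 0 (γ₀⁻¹ • c) L, fromBlocks (γ₀ • 1) (β₀⁻¹ • r) 0 U, ?_, ?_, ?_⟩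
  · simp [fromBlocks_multiply, smul_smul, hβ, hγ, add_comm, mul_comm]
  · rw [charpoly_fromBlocks_zero₁₂, hL, Fintype.prod_sum_type]
    simp [hβ₀, hunit]
  · rw [charpoly_fromBlocks_zero₂₁, hU, Fintype.prod_sum_type]
    simp [hγ₀, hunit]

theorem of_toBlocks₂₁_ne_zero {A : Matrix (Unit ⊕ κ) (Unit ⊕ κ) F} {β γ : Unit ⊕ κ → F}
    (hA : A.toBlocks₂₁ ≠ 0) (hβ : ∀ i, β i ≠ 0) (hγ : ∀ i, γ i ≠ 0)
    (hdet : A.det = (∏ i, β i) * ∏ i, γ i)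
    (hκ : ∀ S : Matrix κ κ F, (Nontrivial κ → S ∉ Set.range (scalar κ)) →
      S.det = (∏ i, β (.inr i)) * ∏ i, γ (.inr i) →
      HasSpectralFactorization S (β ∘ .inr) (γ ∘ .inr)) :
    HasSpectralFactorization A β γ := by
  have hδ : β (.inl ()) * γ (.inl ()) ≠ 0 := mul_ne_zero (hβ _) (hγ _)
  have hdet_ne : (fromBlocks A.toBlocks₁₁ A.toBlocks₁₂ A.toBlocks₂₁ A.toBlocks₂₂).det ≠ 0 := by
    rw [fromBlocks_toBlocks, hdet]
    exact mul_ne_zero (Finset.prod_ne_zero_iff.2 fun i _ => hβ i)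
      (Finset.prod_ne_zero_iff.2 fun i _ => hγ i)
  obtain ⟨r, S, hS, hconj⟩ := exists_isConj_schurComplement_notMem_range_scalar hδ _ _ hA _ hdet_ne
  rw [fromBlocks_toBlocks] at hconj
  refine (fromBlocks_of_schurComplement (hβ _) (hγ _) r _ (hκ S hS ?_)).of_isConj hconj.symm
  rw [det_eq_of_isConj hconj, det_fromBlocks_smul_one hδ, Fintype.prod_sum_type,
    Fintype.prod_sum_type] at hdet
  refine mul_left_cancel₀ hδ (hdet.trans ?_)
  simp only [Finset.univ_unique, Finset.prod_singleton, PUnit.default_eq_unit]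
  ring

end HasSpectralFactorization

/-- Sourour's theorem: the factors may be prescribed any nonzero eigenvalues compatible with the
determinant. -/
theorem hasSpectralFactorization_of_notMem_range_scalar {ι : Type*} [Fintype ι] [DecidableEq ι]
    (A : Matrix ι ι F) (β γ : ι → F)
    (hA : Nontrivial ι → A ∉ Set.range (scalar ι)) (hβ : ∀ i, β i ≠ 0) (hγ : ∀ i, γ i ≠ 0)
    (hdet : A.det = (∏ i, β i) * ∏ i, γ i) : HasSpectralFactorization A β γ := by
  cases subsingleton_or_nontrivial ι with
  | inl _ => exact .of_subsingleton hdet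
  | inr hι =>
    obtain ⟨A', hconj, i, j, hij, hentry⟩ := exists_isConj_offDiag_ne_zero (hA hι)
    refine HasSpectralFactorization.of_isConj ?_ hconj.symm
    let e : Unit ⊕ {x // x ≠ j} ≃ ι :=
      ((Equiv.equivPUnit {x // x = j}).symm.sumCongr (Equiv.refl _)).trans (Equiv.sumCompl (· = j))
    refine .of_submatrix e (.of_toBlocks₂₁_ne_zero ?_ (fun _ => hβ _) (fun _ => hγ _) ?_ ?_)
    · exact fun h => hentry (congrFun (congrFun h ⟨i, hij⟩) ())
    · rw [det_submatrix_equiv_self, ← det_eq_of_isConj hconj, hdet]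
      exact congrArg₂ _ (Fintype.prod_equiv e _ _ fun _ => rfl).symm
        (Fintype.prod_equiv e _ _ fun _ => rfl).symm
    · exact fun S hS hdetS => hasSpectralFactorization_of_notMem_range_scalar S _ _ hS
        (fun _ => hβ _) (fun _ => hγ _) hdetS
termination_by Fintype.card ι
decreasing_by exact Fintype.card_subtype_lt (x := j) (by simp)

end Sourour

section WordValues

variable {d : ℕ} {w : FreeGroup (Fin d)} {G H : Type*} [Group G] [Group H]

theorem map_mem_wordValues (φ : G →* H) {x : G} (hx : x ∈ wordValues w G) :
    φ x ∈ wordValues w H := by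
  obtain ⟨g, rfl⟩ := hx
  exact ⟨φ ∘ g, (FreeGroup.lift_unique (φ.comp (FreeGroup.lift g)) (by simp)).symm⟩

theorem one_mem_wordValues (w : FreeGroup (Fin d)) (G : Type*) [Group G] :
    1 ∈ wordValues w G :=
  map_mem_wordValues (1 : G →* G) (Set.mem_range_self 1)

theorem prodMk_mem_wordValues {x : G} {y : H} (hx : x ∈ wordValues w G)
    (hy : y ∈ wordValues w H) : (x, y) ∈ wordValues w (G × H) := by
  obtain ⟨g, rfl⟩ := hx
  obtain ⟨h, rfl⟩ := hy
  exact ⟨fun i => (g i, h i),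
    (FreeGroup.lift_unique ((FreeGroup.lift g).prod (FreeGroup.lift h)) (by simp)).symm⟩

theorem wordValues_subset_of_isConj {w' : FreeGroup (Fin d)} (h : IsConj w w') :
    wordValues w G ⊆ wordValues w' G := by
  obtain ⟨c, rfl⟩ := isConj_iff.1 h.symm
  rintro _ ⟨g, rfl⟩
  have hg : FreeGroup.lift g w' ∈ wordValues w' G := ⟨g, rfl⟩
  simpa using map_mem_wordValues (MulAut.conj (FreeGroup.lift g c)).toMonoidHom hg

end WordValues

section SpecialLinearGroup

variable {R : Type*} [CommRing R]

/-- The restriction to special linear groups of a multiplicative map between matrix rings that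
preserves the condition `det A = 1`. -/
def specialLinearRestrict (φ : Matrix ι ι R →* Matrix κ κ R)
    (hφ : ∀ A, A.det = 1 → (φ A).det = 1) :
    Matrix.SpecialLinearGroup ι R →* Matrix.SpecialLinearGroup κ R where
  toFun A := ⟨φ A.1, hφ A.1 A.2⟩
  map_one' := Subtype.ext (map_one φ)
  map_mul' A B := Subtype.ext (map_mul φ A.1 B.1)

/-- The block-diagonal embedding, which assembles values of a word on smaller groups. -/
def specialLinearBlockDiagonal :
    Matrix.SpecialLinearGroup ι R × Matrix.SpecialLinearGroup κ R →*
      Matrix.SpecialLinearGroup (ι ⊕ κ) R where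
  toFun A := ⟨fromBlocks A.1 0 0 A.2, by simp⟩
  map_one' := Subtype.ext fromBlocks_one
  map_mul' A B := Subtype.ext <| by
    change fromBlocks (A.1.1 * B.1.1) 0 0 (A.2.1 * B.2.1) =
      fromBlocks A.1.1 0 0 A.2.1 * fromBlocks B.1.1 0 0 B.2.1
    simp [fromBlocks_multiply]

variable {d : ℕ} {w : FreeGroup (Fin d)}

theorem exists_mem_wordValues_coe_eq_of_isConj {h : Matrix.SpecialLinearGroup ι R}
    (hh : h ∈ wordValues w (Matrix.SpecialLinearGroup ι R)) {B : Matrix ι ι R} (hB : IsConj h.1 B) :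
    ∃ b ∈ wordValues w (Matrix.SpecialLinearGroup ι R), b.1 = B := by
  obtain ⟨P, hP⟩ := hB
  let φ : Matrix ι ι R →* Matrix ι ι R := MulDistribMulAction.toMonoidHom _ (ConjAct.toConjAct P)
  have hφ (A : Matrix ι ι R) : φ A = P * A * (P⁻¹ : (Matrix ι ι R)ˣ) := rfl
  refine ⟨specialLinearRestrict φ (fun A hA => ?_) h, map_mem_wordValues _ hh, ?_⟩
  · rw [hφ, det_units_conj, hA]
  · change φ h.1 = B
    rw [hφ, hP.eq, P.mul_inv_cancel_right]

end SpecialLinearGroup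

section SplitRegular

/-- `w` takes on `SL_ι(F)` a value whose characteristic polynomial is a product of distinct linear
factors, i.e. whose conjugacy class is determined by its eigenvalues. -/
def HasSplitRegularValue {d : ℕ} (w : FreeGroup (Fin d)) (ι F : Type*) [Fintype ι] [DecidableEq ι]
    [Field F] : Prop :=
  ∃ D : ι → F, Function.Injective D ∧ ∃ h ∈ wordValues w (Matrix.SpecialLinearGroup ι F),
    h.1.charpoly = ∏ i, (X - C (D i))

namespace HasSplitRegularValue

variable {F : Type*} [Field F] {d d₁ d₂ : ℕ} {w : FreeGroup (Fin d)}

theorem map {K : Type*} [Field K] (f : K →+* F) (h : HasSplitRegularValue w ι K) :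
    HasSplitRegularValue w ι F := by
  obtain ⟨D, hD, x, hx, hxD⟩ := h
  refine ⟨f ∘ D, f.injective.comp hD, _,
    map_mem_wordValues (Matrix.SpecialLinearGroup.map f) hx, ?_⟩
  change (x.1.map f).charpoly = _
  rw [charpoly_map, hxD, Polynomial.map_prod]
  simp

theorem reindex (e : κ ≃ ι) (h : HasSplitRegularValue w κ F) : HasSplitRegularValue w ι F := by
  obtain ⟨D, hD, x, hx, hxD⟩ := h
  let φ : Matrix κ κ F →* Matrix ι ι F := reindexRingEquiv F e
  refine ⟨D ∘ e.symm, hD.comp e.symm.injective,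
    _, map_mem_wordValues (specialLinearRestrict φ fun A hA => ?_) hx, ?_⟩
  · exact (det_reindex_self e A).trans hA
  · change (Matrix.reindex e e x.1).charpoly = _
    rw [charpoly_reindex, hxD]
    exact Fintype.prod_equiv e _ _ fun i => by simp

theorem of_subsingleton [Subsingleton ι] : HasSplitRegularValue w ι F :=
  ⟨1, Function.injective_of_subsingleton _, 1, one_mem_wordValues w _, by
    simp [← diagonal_one, charpoly_diagonal]⟩

theorem mul_eq_of_notMem_center {w₁ : FreeGroup (Fin d₁)} {w₂ : FreeGroup (Fin d₂)}
    (h₁ : HasSplitRegularValue w₁ ι F) (h₂ : HasSplitRegularValue w₂ ι F)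
    {g : Matrix.SpecialLinearGroup ι F} (hg : g ∉ Subgroup.center (Matrix.SpecialLinearGroup ι F)) :
    ∃ g₁ ∈ wordValues w₁ (Matrix.SpecialLinearGroup ι F),
      ∃ g₂ ∈ wordValues w₂ (Matrix.SpecialLinearGroup ι F), g = g₁ * g₂ := by
  obtain ⟨β, hβ, b, hb, hbβ⟩ := h₁
  obtain ⟨γ, hγ, c, hc, hcγ⟩ := h₂
  have hβ_prod : ∏ i, β i = 1 := by rw [← det_eq_prod_of_charpoly_eq_prod hbβ, b.2]
  have hγ_prod : ∏ i, γ i = 1 := by rw [← det_eq_prod_of_charpoly_eq_prod hcγ, c.2]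
  have hg_scalar : g.1 ∉ Set.range (scalar ι) := by
    rintro ⟨μ, hμ⟩
    refine hg (Matrix.SpecialLinearGroup.mem_center_iff.2 ⟨μ, ?_, hμ⟩)
    simpa [← hμ] using g.2
  obtain ⟨B, C, hBC, hB, hC⟩ := hasSpectralFactorization_of_notMem_range_scalar g.1 β γ
    (fun _ => hg_scalar)
    (fun i hi => by simp [Finset.prod_eq_zero (Finset.mem_univ i) hi] at hβ_prod)
    (fun i hi => by simp [Finset.prod_eq_zero (Finset.mem_univ i) hi] at hγ_prod)
    (by rw [hβ_prod, hγ_prod, g.2, one_mul])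
  obtain ⟨g₁, hg₁, rfl⟩ := exists_mem_wordValues_coe_eq_of_isConj hb <|
    (isConj_diagonal_of_charpoly_eq_prod hβ hbβ).symm.trans
      (isConj_diagonal_of_charpoly_eq_prod hβ hB)
  obtain ⟨g₂, hg₂, rfl⟩ := exists_mem_wordValues_coe_eq_of_isConj hc <|
    (isConj_diagonal_of_charpoly_eq_prod hγ hcγ).symm.trans
      (isConj_diagonal_of_charpoly_eq_prod hγ hC)
  exact ⟨g₁, hg₁, g₂, hg₂, Subtype.ext hBC⟩

end HasSplitRegularValue

end SplitRegular

section ReducedWords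

theorem exists_isCyclicallyReduced_isConj {α : Type*} {w : FreeGroup α} (hw : w ≠ 1) :
    ∃ L ≠ [], FreeGroup.IsCyclicallyReduced L ∧ IsConj w (FreeGroup.mk L) := by
  classical
  have hconj : IsConj (FreeGroup.mk (FreeGroup.reduceCyclically w.toWord)) w := by
    refine isConj_iff.2 ⟨FreeGroup.mk (FreeGroup.reduceCyclically.conjugator w.toWord), ?_⟩
    rw [FreeGroup.inv_mk, FreeGroup.mul_mk, FreeGroup.mul_mk,
      FreeGroup.reduceCyclically.conj_conjugator_reduceCyclically, FreeGroup.mk_toWord]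
  refine ⟨_, fun hL => hw ?_, FreeGroup.reduceCyclically.isCyclicallyReduced
    FreeGroup.isReduced_toWord, hconj.symm⟩
  rw [hL, ← FreeGroup.one_eq_mk] at hconj
  exact isConj_one_right.1 hconj

end ReducedWords

section RankOneProducts

variable {R : Type*} [CommSemiring R] [NoZeroDivisors R] [Nontrivial R]

theorem exists_list_prod_vecMulVec_eq_smul (p : (ι → R) × (ι → R)) (l : List ((ι → R) × (ι → R)))
    (hl : (p :: l).IsChain fun q r => q.2 ⬝ᵥ r.1 ≠ 0) :
    ∃ k : R, k ≠ 0 ∧ ((p :: l).map fun q => vecMulVec q.1 q.2).prod =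
      k • vecMulVec p.1 ((p :: l).getLast (List.cons_ne_nil p l)).2 := by
  induction l generalizing p with
  | nil => exact ⟨1, one_ne_zero, by simp⟩
  | cons q l ih =>
    obtain ⟨hpq, hl⟩ := List.isChain_cons_cons.1 hl
    obtain ⟨k, hk, hprod⟩ := ih q hl
    refine ⟨k * (p.2 ⬝ᵥ q.1), mul_ne_zero hk hpq, ?_⟩
    rw [List.map_cons, List.prod_cons, hprod, mul_smul_comm, vecMulVec_mul_vecMulVec,
      vecMulVec_smul, smul_smul, List.getLast_cons (List.cons_ne_nil q l)]

theorem trace_list_prod_vecMulVec_ne_zero {l : List ((ι → R) × (ι → R))} (hl : l ≠ [])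
    (hchain : l.IsChain fun q r => q.2 ⬝ᵥ r.1 ≠ 0)
    (hcycle : (l.getLast hl).2 ⬝ᵥ (l.head hl).1 ≠ 0) :
    (l.map fun q => vecMulVec q.1 q.2).prod.trace ≠ 0 := by
  cases l with
  | nil => exact absurd rfl hl
  | cons p l =>
    obtain ⟨k, hk, hprod⟩ := exists_list_prod_vecMulVec_eq_smul p l hchain
    rw [hprod, trace_smul, trace_vecMulVec, dotProduct_comm]
    exact mul_ne_zero hk hcycle

end RankOneProducts

section SlopeProjections

variable {K : Type*} [Field K]

/-- For `x ≠ y`, the projection of `K²` onto the line spanned by `(1, x)` along the line spanned by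
`(1, y)`. -/
def slopeProj (x y : K) : Matrix (Fin 2) (Fin 2) K :=
  vecMulVec ((x - y)⁻¹ • ![1, x]) ![-y, 1]

theorem slopeProj_add_swap {x y : K} (hxy : x ≠ y) : slopeProj x y + slopeProj y x = 1 := by
  have hsub : x - y ≠ 0 := sub_ne_zero.2 hxy
  have hinv : (y - x)⁻¹ = -(x - y)⁻¹ := by rw [← neg_sub x y, inv_neg]
  ext i j
  fin_cases i <;> fin_cases j <;> simp [slopeProj, hinv] <;> field_simp <;> ring

theorem slopeProj_mul_swap (x y : K) : slopeProj x y * slopeProj y x = 0 := by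
  have hdot : ![-y, 1] ⬝ᵥ ((y - x)⁻¹ • ![1, y]) = 0 := by
    simp [mul_comm]
  rw [slopeProj, slopeProj, vecMulVec_mul_vecMulVec, hdot, zero_smul, vecMulVec_zero]

theorem slopeProj_mul_self {x y : K} (hxy : x ≠ y) :
    slopeProj x y * slopeProj x y = slopeProj x y := by
  rw [← sub_eq_zero, ← mul_sub_one, ← slopeProj_add_swap hxy, sub_add_cancel_left, mul_neg,
    slopeProj_mul_swap, neg_zero]

theorem det_smul_slopeProj_add_smul_swap {x y : K} (hxy : x ≠ y) (s t : K) :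
    (s • slopeProj x y + t • slopeProj y x).det = s * t := by
  have hsub : x - y ≠ 0 := sub_ne_zero.2 hxy
  have hinv : (y - x)⁻¹ = -(x - y)⁻¹ := by rw [← neg_sub x y, inv_neg]
  simp only [det_fin_two, slopeProj, vecMulVec, hinv, Pi.smul_apply, smul_eq_mul, smul_of, neg_mul,
    Matrix.add_apply, of_apply, cons_val_zero, mul_one, mul_neg, neg_neg, cons_val_one,
    cons_val_fin_one]
  field_simp
  ring

/-- The element of `SL₂(K)` acting on `(1, x)` by `t⁻¹` and on `(1, y)` by `t`. -/
def hyperbolicElement {x y t : K} (hxy : x ≠ y) (ht : t ≠ 0) :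
    Matrix.SpecialLinearGroup (Fin 2) K :=
  ⟨t⁻¹ • slopeProj x y + t • slopeProj y x, by
    rw [det_smul_slopeProj_add_smul_swap hxy, inv_mul_cancel₀ ht]⟩

theorem hyperbolicElement_inv {x y t : K} (hxy : x ≠ y) (ht : t ≠ 0) :
    (hyperbolicElement hxy ht)⁻¹ = hyperbolicElement hxy.symm ht := by
  refine inv_eq_of_mul_eq_one_right (Subtype.ext ?_)
  change (t⁻¹ • slopeProj x y + t • slopeProj y x) * (t⁻¹ • slopeProj y x + t • slopeProj x y) = 1
  simp [add_mul, mul_add, smul_smul, slopeProj_mul_swap, slopeProj_mul_self, hxy, hxy.symm, ht,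
    slopeProj_add_swap]

theorem trace_prod_map_slopeProj_ne_zero {α : Type*} {a : α × Bool → K}
    (ha : Function.Injective a) {L : List (α × Bool)} (hL : L ≠ [])
    (hcyc : FreeGroup.IsCyclicallyReduced L) :
    (L.map fun c => slopeProj (a c) (a (c.1, !c.2))).prod.trace ≠ 0 := by
  let v (c : α × Bool) : (Fin 2 → K) × (Fin 2 → K) :=
    ((a c - a (c.1, !c.2))⁻¹ • ![1, a c], ![-a (c.1, !c.2), 1])
  have hv {c c' : α × Bool} (h : c.1 = c'.1 → c.2 = c'.2) : (v c).2 ⬝ᵥ (v c').1 ≠ 0 := by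
    have hdot : (v c).2 ⬝ᵥ (v c').1 =
        (a c' - a (c'.1, !c'.2))⁻¹ * (a c' - a (c.1, !c.2)) := by
      simp only [smul_cons, smul_eq_mul, mul_one, smul_empty, dotProduct_cons, head_cons, neg_mul,
        tail_cons, one_mul, dotProduct_of_isEmpty, add_zero, v]
      ring
    rw [hdot]
    refine mul_ne_zero (inv_ne_zero (sub_ne_zero.2 ?_)) (sub_ne_zero.2 ?_)
    · exact ha.ne fun hc => (Bool.eq_not_self c'.2).1 (congrArg Prod.snd hc)
    · refine ha.ne fun hc => ?_
      have h₂ : c'.2 = !c.2 := congrArg Prod.snd hc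
      exact (Bool.eq_not_self c.2).1 ((h (congrArg Prod.fst hc).symm).trans h₂)
  have hmap : (L.map fun c => slopeProj (a c) (a (c.1, !c.2))) =
      (L.map v).map fun q => vecMulVec q.1 q.2 := by
    rw [List.map_map]
    rfl
  rw [hmap]
  refine trace_list_prod_vecMulVec_ne_zero (mt List.map_eq_nil_iff.1 hL) ?_ ?_
  · exact List.isChain_map_of_isChain v (fun _ _ => hv) hcyc.isReduced
  · rw [List.getLast_map, List.head_map]
    exact hv (hcyc.2 _ (List.getLast_mem_getLast? hL) _ (List.head_mem_head? hL))

theorem coe_lift_hyperbolicElement_mk {α : Type*} {a : α × Bool → K}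
    (ha : ∀ i, a (i, true) ≠ a (i, false)) {t : K} (ht : t ≠ 0) (L : List (α × Bool)) :
    (FreeGroup.lift (fun i => hyperbolicElement (ha i) ht) (FreeGroup.mk L)).1 =
      t⁻¹ ^ L.length • (L.map fun c => slopeProj (a c) (a (c.1, !c.2)) +
        t ^ 2 • slopeProj (a (c.1, !c.2)) (a c)).prod := by
  have hinv (x y : K) : t⁻¹ • slopeProj x y + t • slopeProj y x =
      t⁻¹ • (slopeProj x y + t ^ 2 • slopeProj y x) := by
    rw [smul_add, smul_smul, sq, inv_mul_cancel_left₀ ht]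
  rw [← Matrix.SpecialLinearGroup.coeMonoidHom_apply, FreeGroup.lift_mk, map_list_prod,
    ← List.length_map, List.smul_prod, List.map_map, List.map_map]
  refine congrArg List.prod (List.map_congr_left ?_)
  rintro ⟨i, _ | _⟩ -
  · change ((hyperbolicElement (ha i) ht)⁻¹).1 = _
    rw [hyperbolicElement_inv]
    exact hinv _ _
  · exact hinv _ _

end SlopeProjections

section Trace

variable {K : Type*} [NontriviallyNormedField K]

theorem tendsto_inv_pow_mul_nhdsNE_zero_cobounded {T : K → K} (hT : ContinuousAt T 0)
    (hT0 : T 0 ≠ 0) {m : ℕ} (hm : m ≠ 0) :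
    Tendsto (fun t => t⁻¹ ^ m * T t) (𝓝[≠] 0) (cobounded K) := by
  rw [← tendsto_norm_atTop_iff_cobounded]
  simp only [norm_mul, norm_pow]
  refine Tendsto.atTop_mul_pos (norm_pos_iff.2 hT0) ?_
    (hT.norm.tendsto.mono_left nhdsWithin_le_nhds)
  exact (tendsto_pow_atTop hm).comp
    (tendsto_norm_cobounded_atTop.comp tendsto_inv₀_nhdsNE_zero)

theorem frequently_cobounded_exists_trace_eq {d : ℕ} {w : FreeGroup (Fin d)} (hw : w ≠ 1) :
    ∃ᶠ τ in cobounded K, ∃ h ∈ wordValues w (Matrix.SpecialLinearGroup (Fin 2) K),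
      h.1.trace = τ := by
  obtain ⟨L, hL, hcyc, hconj⟩ := exists_isCyclicallyReduced_isConj hw
  let a : Fin d × Bool ↪ K :=
    (Fintype.equivFin _).toEmbedding.trans (Fin.valEmbedding.trans (Infinite.natEmbedding K))
  have ha (i : Fin d) : a (i, true) ≠ a (i, false) := a.injective.ne (by simp)
  let T (t : K) : K := (L.map fun c => slopeProj (a c) (a (c.1, !c.2)) +
    t ^ 2 • slopeProj (a (c.1, !c.2)) (a c)).prod.trace
  have hT : Continuous T := by
    refine Continuous.matrix_trace (continuous_list_prod _ fun c _ => ?_)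
    fun_prop
  have hT0 : T 0 ≠ 0 := by
    simpa [T] using trace_prod_map_slopeProj_ne_zero a.injective hL hcyc
  refine (tendsto_inv_pow_mul_nhdsNE_zero_cobounded hT.continuousAt hT0
    (List.length_eq_zero_iff.not.2 hL)).frequently (Eventually.frequently ?_)
  filter_upwards [self_mem_nhdsWithin] with t ht
  refine ⟨_, wordValues_subset_of_isConj hconj.symm
    ⟨fun i => hyperbolicElement (ha i) ht, rfl⟩, ?_⟩
  rw [coe_lift_hyperbolicElement_mk ha ht, trace_smul, smul_eq_mul]

end Trace

section Eigenvalues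

variable {K : Type*} [NontriviallyNormedField K]

theorem eventually_cobounded_exists_add_inv_eq [CompleteSpace K] {U : Set K} (hU : U ∈ 𝓝 0) :
    ∀ᶠ τ in cobounded K, ∃ u ∈ U, u ≠ 0 ∧ u + u⁻¹ = τ := by
  -- `u + u⁻¹ = τ` amounts to `φ u = τ⁻¹`, and `φ` is a local homeomorphism at `0`.
  let φ (u : K) : K := u / (1 + u ^ 2)
  have hφ : HasStrictDerivAt φ 1 0 :=
    ((hasStrictDerivAt_id (0 : K)).div (((hasStrictDerivAt_id (0 : K)).pow 2).const_add 1)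
      (by simp)).congr_deriv (by simp)
  have hφ0 : φ 0 = 0 := by simp [φ]
  have himage : φ '' U ∈ 𝓝 0 := by
    rw [← hφ0, ← hφ.map_nhds_eq one_ne_zero]
    exact image_mem_map hU
  filter_upwards [tendsto_inv₀_cobounded.eventually_mem himage, eventually_ne_cobounded 0]
    with τ ⟨u, hu, huτ⟩ hτ
  have hφu : u / (1 + u ^ 2) ≠ 0 := huτ.trans_ne (inv_ne_zero hτ)
  have hu0 : u ≠ 0 := fun h => hφu (by simp [h])
  refine ⟨u, hu, hu0, inv_injective ?_⟩
  rw [← huτ]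
  simp only [φ]
  field_simp
  ring

theorem charpoly_eq_of_trace_eq_add_inv {F : Type*} [Field F]
    (h : Matrix.SpecialLinearGroup (Fin 2) F) {u : F} (hu : u ≠ 0) (htr : u + u⁻¹ = h.1.trace) :
    h.1.charpoly = ∏ i, (X - C (![u, u⁻¹] i)) := by
  have hC : (C u * C u⁻¹ : F[X]) = 1 := by rw [← C_mul, mul_inv_cancel₀ hu, C_1]
  rw [charpoly_fin_two, ← htr, h.2, Fin.prod_univ_two]
  simp only [C_add, C_1, cons_val_zero, cons_val_one]
  linear_combination -hC

end Eigenvalues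

namespace HasSplitRegularValue

variable {K : Type*} [NontriviallyNormedField K] [CompleteSpace K] {d : ℕ} {w : FreeGroup (Fin d)}

theorem sum_fin_two (hw : w ≠ 1) (h : HasSplitRegularValue w κ K) :
    HasSplitRegularValue w (Fin 2 ⊕ κ) K := by
  obtain ⟨D, hD, y, hy, hyD⟩ := h
  have hD0 (i : κ) : D i ≠ 0 := by
    have hprod : ∏ i, D i = 1 := by rw [← det_eq_prod_of_charpoly_eq_prod hyD, y.2]
    exact Finset.prod_ne_zero_iff.1 (hprod ▸ one_ne_zero) i (Finset.mem_univ i)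
  have hU : ∀ᶠ u in 𝓝 (0 : K), u * u ≠ 1 ∧ ∀ i, u ≠ D i ∧ u * D i ≠ 1 := by
    refine .and ?_ (eventually_all.2 fun i => (eventually_ne_nhds (hD0 i).symm).and ?_)
    · exact ContinuousAt.eventually_ne (by fun_prop) (by simp)
    · exact ContinuousAt.eventually_ne (by fun_prop) (by simp)
  obtain ⟨_, ⟨x, hx, rfl⟩, u, ⟨hu_sq, huD⟩, hu0, hu_trace⟩ :=
    ((frequently_cobounded_exists_trace_eq hw).and_eventually
      (eventually_cobounded_exists_add_inv_eq hU)).exists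
  have hpair : Function.Injective ![u, u⁻¹] := by
    rw [injective_pair_iff_ne]
    exact fun h => hu_sq ((mul_eq_one_iff_eq_inv₀ hu0).2 h)
  refine ⟨Sum.elim ![u, u⁻¹] D, hpair.sumElim hD fun j i => ?_, _,
    map_mem_wordValues specialLinearBlockDiagonal (prodMk_mem_wordValues hx hy), ?_⟩
  · fin_cases j
    · exact (huD i).1
    · exact fun h => (huD i).2 ((mul_eq_one_iff_inv_eq₀ hu0).2 h)
  · change (fromBlocks x.1 0 0 y.1).charpoly = _
    rw [charpoly_fromBlocks_zero₁₂, charpoly_eq_of_trace_eq_add_inv x hu0 hu_trace, hyD,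
      Fintype.prod_sum_type]
    rfl

theorem fin (hw : w ≠ 1) : ∀ n, HasSplitRegularValue w (Fin n) K
  | 0 | 1 => of_subsingleton
  | n + 2 => ((fin hw n).sum_fin_two hw).reindex (finSumFinEquiv.trans (finCongr (add_comm 2 n)))

end HasSplitRegularValue

theorem sl_waring_two_noncentral_general {K F : Type*} [NontriviallyNormedField K]
    [CompleteSpace K] [Field F] (f : K →+* F) {d₁ d₂ : ℕ} {w₁ : FreeGroup (Fin d₁)}
    {w₂ : FreeGroup (Fin d₂)} (hw₁ : w₁ ≠ 1) (hw₂ : w₂ ≠ 1) (g : Matrix.SpecialLinearGroup ι F)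
    (hg : g ∉ Subgroup.center (Matrix.SpecialLinearGroup ι F)) :
    ∃ g₁ ∈ wordValues w₁ (Matrix.SpecialLinearGroup ι F),
      ∃ g₂ ∈ wordValues w₂ (Matrix.SpecialLinearGroup ι F), g = g₁ * g₂ := by
  have hsplit {d : ℕ} {w : FreeGroup (Fin d)} (hw : w ≠ 1) : HasSplitRegularValue w ι F :=
    ((HasSplitRegularValue.fin hw (Fintype.card ι)).reindex (Fintype.equivFin ι).symm).map f
  exact (hsplit hw₁).mul_eq_of_notMem_center (hsplit hw₂) hg

end

/-- If `F` admits a ring homomorphism from `ℝ` or from some `ℚ_p`, `n ≥ 2`, and `w₁, w₂` are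
nontrivial words, then every noncentral element of `SL_n(F)` is in `w₁(SL_n(F)) · w₂(SL_n(F))`. -/
theorem sl_waring_two_noncentral {F : Type*} [Field F]
    (hF : Nonempty (ℝ →+* F) ∨ ∃ (p : ℕ) (hp : Fact p.Prime), Nonempty (@Padic p hp →+* F))
    (n : ℕ) (hn : 2 ≤ n) {d₁ d₂ : ℕ} (w₁ : FreeGroup (Fin d₁)) (w₂ : FreeGroup (Fin d₂))
    (hw₁ : w₁ ≠ 1) (hw₂ : w₂ ≠ 1) :
    ∀ g : Matrix.SpecialLinearGroup (Fin n) F,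
      g ∉ Subgroup.center (Matrix.SpecialLinearGroup (Fin n) F) →
      ∃ g₁ ∈ wordValues w₁ (Matrix.SpecialLinearGroup (Fin n) F),
        ∃ g₂ ∈ wordValues w₂ (Matrix.SpecialLinearGroup (Fin n) F), g = g₁ * g₂ := by
  rcases hF with ⟨⟨f⟩⟩ | ⟨p, hp, ⟨f⟩⟩
  · exact fun g hg => sl_waring_two_noncentral_general f hw₁ hw₂ g hg
  · exact fun g hg => sl_waring_two_noncentral_general f hw₁ hw₂ g hg
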